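/- Let T be totally unimodular with block form ((A, e f^T), (g h^T, B)) arising as a 3-sum, i.e., the matrices ((A, e, e), (h^T, 0, 1)) and ((0, 1, f^T), (g, g, B)) are totally unimodular. Then the matrix obtained from T by additionally appending the three rows (0, f^T), (h^T, 0), and (h^T, f^T) is totally unimodular. -/

import Mathlib

/-!
A square submatrix of a 3-sum is again a 3-sum of (possibly rectangular) matrices satisfying the
same hypotheses, so only the determinant of a square 3-sum has to be examined. If `A` has more rows
than columns, the rank-one block `e fᵀ` makes the 3-sum factor through `(A, e)` and `(f, B)`, and
the determinant is the product of two minors of the summands; more columns than rows is the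
transposed case. If `A` and `B` are square, the rank-one block `g hᵀ` is absorbed by the matrix
determinant lemma, which gives `x y - z w` with `x = det A`, `y = det B`, and `z`, `w` the
determinants of `A` bordered by `e`, `h` and of `B` bordered by `g`, `f`. Corner entry `1` in the
hypotheses says that `x + z` and `y + w` are also in `{0, ±1}`, and then so is `x y - z w`.

With the appended rows, `T` is the 3-sum of `B` with `(A, e)` enlarged by the rows `(0, 1)`,
`(h, 0)` and `(h, 1)`. The enlarged matrix satisfies the hypotheses because its third new row is the
sum of the first two.
-/

open Matrix

namespace ThreeSum

section SignType

variable {R : Type*} [CommRing R] {x y z w : R}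

lemma mem_range_signType_iff :
    x ∈ Set.range (SignType.cast : SignType → R) ↔ x = 0 ∨ x = -1 ∨ x = 1 := by
  rw [SignType.range_eq]
  simp

lemma mul_mem_range_signType (hx : x ∈ Set.range (SignType.cast : SignType → R))
    (hy : y ∈ Set.range (SignType.cast : SignType → R)) :
    x * y ∈ Set.range (SignType.cast : SignType → R) := by
  obtain ⟨s, rfl⟩ := hx
  obtain ⟨t, rfl⟩ := hy
  exact ⟨s * t, SignType.coe_mul s t⟩

lemma neg_mem_range_signType (hx : x ∈ Set.range (SignType.cast : SignType → R)) :
    -x ∈ Set.range (SignType.cast : SignType → R) := by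
  obtain ⟨s, rfl⟩ := hx
  exact ⟨-s, SignType.coe_neg s⟩

lemma sub_mem_range_signType_of_two_mem
    (h2 : (2 : R) ∈ Set.range (SignType.cast : SignType → R))
    (hx : x ∈ Set.range (SignType.cast : SignType → R))
    (hy : y ∈ Set.range (SignType.cast : SignType → R)) :
    x - y ∈ Set.range (SignType.cast : SignType → R) := by
  have hneg2 := neg_mem_range_signType h2
  rw [mem_range_signType_iff] at hx hy
  obtain rfl | rfl | rfl := hx <;> obtain rfl | rfl | rfl := hy <;>
    first
    | (ring_nf; assumption)
    | (rw [mem_range_signType_iff]; simp)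

-- The last case occurs only if `2` is `0` or `-1` in `R`, as in characteristic 2 and 3.
lemma eq_zero_or_eq_neg_or_two_mem (hx : x ∈ Set.range (SignType.cast : SignType → R))
    (hz : z ∈ Set.range (SignType.cast : SignType → R))
    (hxz : x + z ∈ Set.range (SignType.cast : SignType → R)) :
    x = 0 ∨ z = 0 ∨ z = -x ∨ z = x ∧ (2 : R) ∈ Set.range (SignType.cast : SignType → R) := by
  rw [mem_range_signType_iff] at *
  grind

lemma mul_sub_mul_mem_range_signType (hx : x ∈ Set.range (SignType.cast : SignType → R))
    (hz : z ∈ Set.range (SignType.cast : SignType → R))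
    (hxz : x + z ∈ Set.range (SignType.cast : SignType → R))
    (hy : y ∈ Set.range (SignType.cast : SignType → R))
    (hw : w ∈ Set.range (SignType.cast : SignType → R))
    (hyw : y + w ∈ Set.range (SignType.cast : SignType → R)) :
    x * y - z * w ∈ Set.range (SignType.cast : SignType → R) := by
  obtain rfl | rfl | rfl | ⟨rfl, h2⟩ := eq_zero_or_eq_neg_or_two_mem hx hz hxz
  · simpa using neg_mem_range_signType (mul_mem_range_signType hz hw)
  · simpa using mul_mem_range_signType hx hy
  · rw [neg_mul, sub_neg_eq_add, ← mul_add]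
    exact mul_mem_range_signType hx hyw
  · rw [← mul_sub]
    exact mul_mem_range_signType hx (sub_mem_range_signType_of_two_mem h2 hy hw)

end SignType

section Det

variable {R : Type*} [CommRing R] {m n a b c d κ ι : Type*}

lemma det_mem_range_signType_of_submatrix_equiv [Fintype m] [DecidableEq m] [Fintype ι]
    [DecidableEq ι] {M : Matrix m m R} (u v : ι ≃ m)
    (hM : (M.submatrix u v).det ∈ Set.range (SignType.cast : SignType → R)) :
    M.det ∈ Set.range (SignType.cast : SignType → R) := by
  let σ : Equiv.Perm m := v.symm.trans u
  have hσ : (M.submatrix σ id).submatrix v v = M.submatrix u v := by ext; simp [σ]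
  have hdet : (σ.sign : R) * (M.submatrix u v).det = M.det := by
    rw [← hσ, det_submatrix_equiv_self, det_permute, ← mul_assoc, ← Int.cast_mul,
      ← Units.val_mul, Int.units_mul_self, Units.val_one, Int.cast_one, one_mul]
  rw [← hdet]
  obtain hs | hs := Int.units_eq_one_or σ.sign
  · simpa [hs] using hM
  · simpa [hs] using neg_mem_range_signType hM

lemma det_submatrix_update_of_row_eq_add [DecidableEq ι] [Fintype ι] {M : Matrix m n R}
    {f : ι → m} {s t : ι} {j : m} (hst : t ≠ s) (hrow : M (f t) = M (f s) + M j) (g : ι → n) :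
    (M.submatrix (Function.update f t j) g).det = (M.submatrix f g).det := by
  rw [← det_updateRow_add_self (M.submatrix (Function.update f t j) g) hst]
  congr 1
  ext i k
  obtain rfl | hi := eq_or_ne i t
  · simp [hrow, hst.symm, add_comm]
  · simp [hi]

lemma isTotallyUnimodular_of_row_eq_add {M : Matrix m n R} {i j l : m} (hil : i ≠ l) (hjl : j ≠ l)
    (hl : M l = M i + M j)
    (hM : (M.submatrix (Subtype.val : {x // x ≠ l} → m) id).IsTotallyUnimodular)
    (hM' : (M.submatrix (Subtype.val : {x // x ≠ i ∧ x ≠ j} → m) id).IsTotallyUnimodular) :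
    M.IsTotallyUnimodular := by
  intro k f g hf _
  have hupdate {i j : m} (hil : i ≠ l) (hjl : j ≠ l) (hl : M l = M i + M j)
      (hlf : l ∈ Set.range f) (hif : i ∈ Set.range f) :
      (M.submatrix f g).det ∈ Set.range SignType.cast := by
    obtain ⟨t, rfl⟩ := hlf
    obtain ⟨s, rfl⟩ := hif
    have hst : t ≠ s := fun hts => hil (congrArg f hts.symm)
    rw [← det_submatrix_update_of_row_eq_add hst hl g]
    refine (isTotallyUnimodular_iff _).1 hM k (fun x => ⟨Function.update f t j x, ?_⟩) g
    obtain rfl | hx := eq_or_ne x t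
    · simpa
    · simpa [hx] using hf.ne hx
  by_cases hlf : l ∈ Set.range f
  · by_cases hif : i ∈ Set.range f
    · exact hupdate hil hjl hl hlf hif
    by_cases hjf : j ∈ Set.range f
    · exact hupdate hjl hil (hl.trans (add_comm _ _)) hlf hjf
    · exact (isTotallyUnimodular_iff _).1 hM' k
        (fun x => ⟨f x, fun h => hif ⟨x, h⟩, fun h => hjf ⟨x, h⟩⟩) g
  · exact (isTotallyUnimodular_iff _).1 hM k (fun x => ⟨f x, fun h => hlf ⟨x, h⟩⟩) g

/-- The matrix `((A, e), (hᵀ, x))`, that is, `A` with a further column `e`, a further row `h` and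
the corner entry `x`; with `x = 0` and `x = 1` it expresses the hypothesis on a summand of a
3-sum. -/
def bordered (A : Matrix m n R) (e : m → R) (h : n → R) (x : R) : Matrix (m ⊕ Unit) (n ⊕ Unit) R :=
  fromBlocks A (replicateCol Unit e) (replicateRow Unit h) (of fun _ _ => x)

section Square

variable [Fintype m] [DecidableEq m] (A : Matrix m m R) (u v : m → R) (x : R)

lemma det_bordered_eq_add : (bordered A u v x).det = x * A.det + (bordered A u v 0).det := by
  let M (r : m ⊕ Unit → R) := updateRow (bordered A u v x) (Sum.inr ()) r
  have hsplit : bordered A u v x =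
      M (Sum.elim (0 : m → R) (fun _ => x) + Sum.elim v (0 : Unit → R)) := by
    ext (i | i) (j | j) <;> simp [M, bordered, updateRow_apply]
  have hcorner : M (Sum.elim (0 : m → R) (fun _ => x)) =
      fromBlocks A (replicateCol Unit u) 0 (of fun _ _ => x) := by
    ext (i | i) (j | j) <;> simp [M, bordered, updateRow_apply]
  have hrow : M (Sum.elim v (0 : Unit → R)) = bordered A u v 0 := by
    ext (i | i) (j | j) <;> simp [M, bordered, updateRow_apply]
  calc (bordered A u v x).det
      = (M (Sum.elim (0 : m → R) (fun _ => x))).det + (M (Sum.elim v (0 : Unit → R))).det := by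
        rw [hsplit, det_updateRow_add]
    _ = x * A.det + (bordered A u v 0).det := by
        rw [hcorner, hrow, det_fromBlocks_zero₂₁, det_unique (of _), of_apply, mul_comm]

-- The Schur complement of the corner `-1` in `bordered A u v (-1)` is `A + vecMulVec u v`.
lemma det_add_vecMulVec : (A + vecMulVec u v).det = A.det - (bordered A u v 0).det := by
  have hschur : (bordered A u v (-1)).det = -(A + vecMulVec u v).det := by
    have hcorner : (of fun _ _ => -1 : Matrix Unit Unit R) = -1 := by ext; simp
    let : Invertible (1 : Matrix Unit Unit R) := invertibleOne
    let : Invertible (-1 : Matrix Unit Unit R) := invertibleNeg 1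
    rw [bordered, hcorner, det_fromBlocks₂₂, invOf_neg, invOf_one, vecMulVec_eq Unit]
    simp
  rw [← neg_eq_iff_eq_neg.2 hschur, det_bordered_eq_add]
  ring

end Square

-- The matrix factors as `((A, E, 0), (D, 0, 1))` times `((1, 0), (0, F), (0, B))`.
lemma det_fromBlocks_mul_submatrix_sumAssoc [Fintype c] [DecidableEq c] [Fintype κ] [DecidableEq κ]
    [Fintype b] [DecidableEq b] (A : Matrix (c ⊕ κ) c R) (E : Matrix (c ⊕ κ) κ R)
    (F : Matrix κ (κ ⊕ b) R) (D : Matrix b c R) (B : Matrix b (κ ⊕ b) R) :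
    ((fromBlocks A (E * F) D B).submatrix id (Equiv.sumAssoc c κ b)).det =
      (fromCols A E).det * (fromRows F B).det := by
  have hfactor : (fromBlocks A (E * F) D B).submatrix id (Equiv.sumAssoc c κ b) =
      fromBlocks (fromCols A E) 0 (fromCols D 0) 1 *
        (fromBlocks 1 0 0 (fromRows F B)).submatrix
          (Equiv.sumAssoc c κ b) (Equiv.sumAssoc c κ b) := by
    ext (i | i) ((j | j) | j) <;>
      simp [mul_apply, Fintype.sum_sum_type, one_apply]
  rw [hfactor, det_mul, det_submatrix_equiv_self, det_fromBlocks_zero₁₂, det_fromBlocks_zero₁₂,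
    det_one, det_one, mul_one, one_mul]

/-- The 3-sum `((A, e fᵀ), (g hᵀ, B))` of the matrices `((A, e, e), (hᵀ, 0, 1))` and
`((0, 1, fᵀ), (g, g, B))`, given by the parts of these matrices that occur in it. -/
def threeSum (A : Matrix a c R) (e : a → R) (h : c → R) (B : Matrix b d R) (g : b → R)
    (f : d → R) : Matrix (a ⊕ b) (c ⊕ d) R :=
  fromBlocks A (vecMulVec e f) (vecMulVec g h) B

lemma transpose_threeSum (A : Matrix a c R) (e : a → R) (h : c → R) (B : Matrix b d R)
    (g : b → R) (f : d → R) : (threeSum A e h B g f)ᵀ = threeSum Aᵀ h e Bᵀ f g := by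
  simp only [threeSum, fromBlocks_transpose, transpose_vecMulVec]

lemma threeSum_submatrix_sum_map {a' b' c' d' : Type*} (A : Matrix a c R) (e : a → R) (h : c → R)
    (B : Matrix b d R) (g : b → R) (f : d → R) (p : a' → a) (q : b' → b) (r : c' → c)
    (s : d' → d) : (threeSum A e h B g f).submatrix (Sum.map p q) (Sum.map r s) =
      threeSum (A.submatrix p r) (e ∘ p) (h ∘ r) (B.submatrix q s) (g ∘ q) (f ∘ s) := by
  ext (i | i) (j | j) <;> rfl

lemma det_bordered_fromBlocks [Fintype a] [DecidableEq a] [Fintype b] [DecidableEq b]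
    (A : Matrix a a R) (e h : a → R) (B : Matrix b b R) (g f : b → R) :
    (bordered (fromBlocks A (vecMulVec e f) 0 B) (Sum.elim 0 g) (Sum.elim h 0) 0).det =
      (bordered A e h 0).det * (bordered B g f 0).det := by
  let E : Matrix (a ⊕ Unit) Unit R := fromRows (replicateCol Unit e) 0
  let F : Matrix Unit (Unit ⊕ b) R := fromCols 0 (replicateRow Unit f)
  let A' : Matrix (a ⊕ Unit) a R := fromRows A (replicateRow Unit h)
  let B' : Matrix b (Unit ⊕ b) R := fromCols (replicateCol Unit g) B
  let σ : (a ⊕ Unit) ⊕ b ≃ (a ⊕ b) ⊕ Unit :=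
    (Equiv.sumAssoc a Unit b).trans
      ((Equiv.sumCongr (Equiv.refl a) (Equiv.sumComm Unit b)).trans (Equiv.sumAssoc a b Unit).symm)
  have hσ : (bordered (fromBlocks A (vecMulVec e f) 0 B) (Sum.elim 0 g) (Sum.elim h 0) 0).submatrix
      σ σ = (fromBlocks A' (E * F) 0 B').submatrix id (Equiv.sumAssoc a Unit b) := by
    ext ((i | i) | i) ((j | j) | j) <;>
      simp [σ, A', B', E, F, bordered, vecMulVec_apply, mul_apply]
  have hA : fromCols A' E = bordered A e h 0 := fromCols_fromRows_eq_fromBlocks ..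
  have hB : fromRows F B' = (bordered B g f 0).submatrix (Equiv.sumComm _ _) (Equiv.sumComm _ _) :=
    (fromRows_fromCols_eq_fromBlocks ..).trans (fromBlocks_submatrix_sum_swap_sum_swap ..).symm
  rw [← det_submatrix_equiv_self σ, hσ, det_fromBlocks_mul_submatrix_sumAssoc, hA, hB,
    det_submatrix_equiv_self]

lemma det_threeSum [Fintype a] [DecidableEq a] [Fintype b] [DecidableEq b] (A : Matrix a a R)
    (e h : a → R) (B : Matrix b b R) (g f : b → R) :
    (threeSum A e h B g f).det =
      A.det * B.det - (bordered A e h 0).det * (bordered B g f 0).det := by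
  have hrank_one : threeSum A e h B g f =
      fromBlocks A (vecMulVec e f) 0 B + vecMulVec (Sum.elim 0 g) (Sum.elim h 0) := by
    ext (i | i) (j | j) <;> simp [threeSum, vecMulVec_apply]
  rw [hrank_one, det_add_vecMulVec, det_bordered_fromBlocks, det_fromBlocks_zero₂₁]

end Det

section Summand

variable {R : Type*} [CommRing R] {a b c d κ : Type*}

/-- The hypothesis on each of the two summands of a 3-sum: `((A, e, e), (hᵀ, 0, 1))` is totally
unimodular. It is stated for the last two columns separately, because they are never needed
together. For the second summand `((0, 1, fᵀ), (g, g, B))`, rows and columns are reordered and the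
hypothesis is `IsSummand B g f`. -/
structure IsSummand (A : Matrix a c R) (e : a → R) (h : c → R) : Prop where
  bordered_zero : (bordered A e h 0).IsTotallyUnimodular
  bordered_one : (bordered A e h 1).IsTotallyUnimodular

namespace IsSummand

variable {A : Matrix a c R} {e : a → R} {h : c → R} {B : Matrix b d R} {g : b → R} {f : d → R}

lemma transpose (hA : IsSummand A e h) : IsSummand Aᵀ h e where
  bordered_zero := by
    convert hA.bordered_zero.transpose using 1
    ext (i | i) (j | j) <;> rfl
  bordered_one := by
    convert hA.bordered_one.transpose using 1
    ext (i | i) (j | j) <;> rfl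

lemma submatrix {a' c' : Type*} (hA : IsSummand A e h) (p : a' → a) (r : c' → c) :
    IsSummand (A.submatrix p r) (e ∘ p) (h ∘ r) where
  bordered_zero := by
    convert hA.bordered_zero.submatrix (Sum.map p id) (Sum.map r id) using 1
    ext (i | i) (j | j) <;> rfl
  bordered_one := by
    convert hA.bordered_one.submatrix (Sum.map p id) (Sum.map r id) using 1
    ext (i | i) (j | j) <;> rfl

lemma fromCols_vecMulVec_single [DecidableEq κ] (hA : IsSummand A e h) (k : κ) :
    (fromCols A (vecMulVec e (Pi.single k 1))).IsTotallyUnimodular := by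
  have hAe : (fromCols A (replicateCol Unit e)).IsTotallyUnimodular := by
    convert hA.bordered_zero.submatrix Sum.inl id using 1
    ext i (j | j) <;> rfl
  let φ (l : κ) : (c ⊕ Unit) ⊕ Unit := if l = k then Sum.inl (Sum.inr ()) else Sum.inr ()
  convert ((fromCols_replicateCol0_isTotallyUnimodular_iff (n' := Unit) _).2 hAe).submatrix id
    (Sum.elim (Sum.inl ∘ Sum.inl) φ) using 1
  ext i (j | j)
  · rfl
  · by_cases hj : j = k <;> simp [φ, hj, vecMulVec_apply]

lemma fromRows_vecMulVec_single [DecidableEq κ] (hB : IsSummand B g f) (k : κ) :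
    (fromRows (vecMulVec (Pi.single k 1) f) B).IsTotallyUnimodular := by
  convert (hB.transpose.fromCols_vecMulVec_single k).transpose.submatrix Sum.swap id using 1
  ext (i | i) j <;> simp [vecMulVec_apply, mul_comm]

section Square

variable [Fintype a] [DecidableEq a] {A : Matrix a a R} {e h : a → R}

lemma det_mem_range_signType (hA : IsSummand A e h) :
    A.det ∈ Set.range (SignType.cast : SignType → R) :=
  (isTotallyUnimodular_iff_fintype _).1 hA.bordered_zero a Sum.inl Sum.inl

lemma det_bordered_mem_range_signType (hA : IsSummand A e h) :
    (bordered A e h 0).det ∈ Set.range (SignType.cast : SignType → R) :=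
  (isTotallyUnimodular_iff_fintype _).1 hA.bordered_zero (a ⊕ Unit) id id

lemma det_add_det_bordered_mem_range_signType (hA : IsSummand A e h) :
    A.det + (bordered A e h 0).det ∈ Set.range (SignType.cast : SignType → R) := by
  rw [← one_mul A.det, ← det_bordered_eq_add]
  exact (isTotallyUnimodular_iff_fintype _).1 hA.bordered_one (a ⊕ Unit) id id

lemma det_threeSum_mem_range_signType [Fintype b] [DecidableEq b] {B : Matrix b b R} {g f : b → R}
    (hA : IsSummand A e h) (hB : IsSummand B g f) :
    (threeSum A e h B g f).det ∈ Set.range (SignType.cast : SignType → R) := by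
  rw [det_threeSum]
  exact mul_sub_mul_mem_range_signType hA.det_mem_range_signType
    hA.det_bordered_mem_range_signType hA.det_add_det_bordered_mem_range_signType
    hB.det_mem_range_signType hB.det_bordered_mem_range_signType
    hB.det_add_det_bordered_mem_range_signType

end Square

lemma det_threeSum_submatrix_sumAssoc_mem_range_signType [Fintype c] [DecidableEq c] [Fintype κ]
    [DecidableEq κ] [Fintype b] [DecidableEq b] {A : Matrix (c ⊕ κ) c R} {e : c ⊕ κ → R}
    {B : Matrix b (κ ⊕ b) R} {f : κ ⊕ b → R} (hA : IsSummand A e h) (hB : IsSummand B g f) :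
    ((threeSum A e h B g f).submatrix id (Equiv.sumAssoc c κ b)).det ∈
      Set.range (SignType.cast : SignType → R) := by
  cases isEmpty_or_nonempty κ with
  | inl _ =>
    let σ : c ⊕ b ≃ (c ⊕ κ) ⊕ b := Equiv.sumCongr (Equiv.sumEmpty c κ).symm (Equiv.refl b)
    have hσ : ((threeSum A e h B g f).submatrix id (Equiv.sumAssoc c κ b)).submatrix σ σ =
        threeSum (A.submatrix Sum.inl id) (e ∘ Sum.inl) h (B.submatrix id Sum.inr) g
          (f ∘ Sum.inr) := by
      ext (i | i) (j | j) <;> rfl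
    rw [← det_submatrix_equiv_self σ, hσ]
    exact (hA.submatrix Sum.inl id).det_threeSum_mem_range_signType (hB.submatrix id Sum.inr)
  | inr hκ =>
    obtain ⟨k⟩ := hκ
    have hef : vecMulVec e f = vecMulVec e (Pi.single k 1) * vecMulVec (Pi.single k 1) f := by
      rw [vecMulVec_mul_vecMulVec]
      simp
    rw [threeSum, hef, det_fromBlocks_mul_submatrix_sumAssoc]
    exact mul_mem_range_signType
      ((isTotallyUnimodular_iff_fintype _).1 (hA.fromCols_vecMulVec_single k) _ id id)
      ((isTotallyUnimodular_iff_fintype _).1 (hB.fromRows_vecMulVec_single k) _ id id)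

end IsSummand

end Summand

section Split

variable {ι a b c d : Type*}

lemma exists_equiv_comp_eq_sum_map [Fintype ι] {α β : Type*} [Fintype α] [Fintype β]
    (f : ι → a ⊕ b) (hα : Fintype.card α = Fintype.card {x // (f x).isLeft = true})
    (hβ : Fintype.card β = Fintype.card {x // ¬(f x).isLeft = true}) :
    ∃ (u : α ⊕ β ≃ ι) (p : α → a) (q : β → b), f ∘ u = Sum.map p q := by
  let eα := Fintype.equivOfCardEq hα
  let eβ := Fintype.equivOfCardEq hβ
  refine ⟨(Equiv.sumCongr eα eβ).trans (Equiv.sumCompl _), fun x => (f (eα x)).getLeft (eα x).2,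
    fun x => (f (eβ x)).getRight (Sum.not_isLeft.1 (eβ x).2), ?_⟩
  ext (x | x) : 1 <;> simp

-- `Fin i ⊕ Fin k` and `Fin j` index the values of `f` in `a` and `b`; `Fin i` and `Fin k ⊕ Fin j`
-- index those of `g` in `c` and `d`.
lemma exists_equiv_comp_eq_sum_map_comp_sumAssoc [Fintype ι] (f : ι → a ⊕ b) (g : ι → c ⊕ d)
    (hcard : Fintype.card {x // (g x).isLeft = true} ≤ Fintype.card {x // (f x).isLeft = true}) :
    ∃ (i j k : ℕ) (u v : (Fin i ⊕ Fin k) ⊕ Fin j ≃ ι) (p : Fin i ⊕ Fin k → a) (q : Fin j → b)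
      (r : Fin i → c) (s : Fin k ⊕ Fin j → d),
      f ∘ u = Sum.map p q ∧ g ∘ v = Sum.map r s ∘ Equiv.sumAssoc _ _ _ := by
  let i := Fintype.card {x // (g x).isLeft = true}
  let j := Fintype.card {x // ¬(f x).isLeft = true}
  obtain ⟨k, hk⟩ := Nat.exists_eq_add_of_le hcard
  have hcompl : Fintype.card (Fin k ⊕ Fin j) = Fintype.card {x // ¬(g x).isLeft = true} := by
    have hf := Fintype.card_congr (Equiv.sumCompl fun x => (f x).isLeft = true)
    have hg := Fintype.card_congr (Equiv.sumCompl fun x => (g x).isLeft = true)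
    rw [Fintype.card_sum] at hf hg
    rw [Fintype.card_sum, Fintype.card_fin, Fintype.card_fin]
    omega
  obtain ⟨u, p, q, hu⟩ := exists_equiv_comp_eq_sum_map (α := Fin i ⊕ Fin k) (β := Fin j) f
    (by simp [i, hk]) (Fintype.card_fin _)
  obtain ⟨v, r, s, hv⟩ := exists_equiv_comp_eq_sum_map (α := Fin i) (β := Fin k ⊕ Fin j) g
    (Fintype.card_fin _) hcompl
  exact ⟨i, j, k, u, (Equiv.sumAssoc _ _ _).trans v, p, q, r, s, hu,
    congrArg (· ∘ Equiv.sumAssoc _ _ _) hv⟩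

end Split

section TotallyUnimodular

variable {R : Type*} [CommRing R] {a b c d : Type*} {A : Matrix a c R} {e : a → R} {h : c → R}
  {B : Matrix b d R} {g : b → R} {f : d → R}

namespace IsSummand

lemma det_threeSum_submatrix_mem_range_signType {ι : Type*} [Fintype ι] [DecidableEq ι]
    (hA : IsSummand A e h) (hB : IsSummand B g f) (rows : ι → a ⊕ b) (cols : ι → c ⊕ d)
    (hcard : Fintype.card {x // (cols x).isLeft = true} ≤
      Fintype.card {x // (rows x).isLeft = true}) :
    ((threeSum A e h B g f).submatrix rows cols).det ∈
      Set.range (SignType.cast : SignType → R) := by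
  obtain ⟨i, j, k, u, v, p, q, r, s, hrows, hcols⟩ :=
    exists_equiv_comp_eq_sum_map_comp_sumAssoc rows cols hcard
  refine det_mem_range_signType_of_submatrix_equiv u v ?_
  have hcanonical : (threeSum A e h B g f).submatrix (rows ∘ u) (cols ∘ v) =
      (threeSum (A.submatrix p r) (e ∘ p) (h ∘ r) (B.submatrix q s) (g ∘ q) (f ∘ s)).submatrix id
        (Equiv.sumAssoc _ _ _) := by
    rw [hrows, hcols, ← threeSum_submatrix_sum_map, submatrix_submatrix, Function.comp_id]
  rw [submatrix_submatrix, hcanonical]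
  exact (hA.submatrix p r).det_threeSum_submatrix_sumAssoc_mem_range_signType (hB.submatrix q s)

theorem threeSum_isTotallyUnimodular (hA : IsSummand A e h) (hB : IsSummand B g f) :
    (threeSum A e h B g f).IsTotallyUnimodular := by
  rw [isTotallyUnimodular_iff]
  intro k rows cols
  obtain hcard | hcard := le_total (Fintype.card {x // (cols x).isLeft = true})
    (Fintype.card {x // (rows x).isLeft = true})
  · exact hA.det_threeSum_submatrix_mem_range_signType hB rows cols hcard
  · rw [← det_transpose, transpose_submatrix, transpose_threeSum]
    exact hA.transpose.det_threeSum_submatrix_mem_range_signType hB.transpose cols rows hcard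

end IsSummand

end TotallyUnimodular

section AppendedRows

variable {R : Type*} [CommRing R] {a c : Type*} {A : Matrix a c R} {e : a → R} {h : c → R}

namespace IsSummand

lemma fromRows_fromCols_isTotallyUnimodular (hA : IsSummand A e h) :
    (fromCols (fromRows A (of ![0, h, h]))
      (replicateCol Unit (Sum.elim e ![1, 0, 1]))).IsTotallyUnimodular := by
  classical
  refine isTotallyUnimodular_of_row_eq_add (i := Sum.inr 0) (j := Sum.inr 1) (l := Sum.inr 2)
    (by simp) (by simp) (by ext (j | j) <;> simp) ?_ ?_
  · have hunit : (fromRows (bordered A e h 0)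
        (of fun _ : Unit => Sum.elim 0 1)).IsTotallyUnimodular :=
      hA.bordered_zero.fromRows_unitlike fun _ _ => ⟨Sum.inr (), 1, by ext (j | j) <;> simp⟩
    let φ : a ⊕ Fin 3 → (a ⊕ Unit) ⊕ Unit :=
      Sum.elim (Sum.inl ∘ Sum.inl) ![Sum.inr (), Sum.inl (Sum.inr ()), Sum.inr ()]
    convert hunit.submatrix (φ ∘ Subtype.val) id using 1
    ext ⟨i | i, hi⟩ (j | j)
    · rfl
    · rfl
    all_goals revert hi; fin_cases i <;> simp [φ, bordered]
  · let φ : a ⊕ Fin 3 → a ⊕ Unit := Sum.map id fun _ => ()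
    convert hA.bordered_one.submatrix (φ ∘ Subtype.val) id using 1
    ext ⟨i | i, hi⟩ (j | j)
    · rfl
    · rfl
    all_goals revert hi; fin_cases i <;> simp [φ, bordered]

lemma fromRows (hA : IsSummand A e h) :
    IsSummand (fromRows A (of ![0, h, h])) (Sum.elim e ![1, 0, 1]) h where
  bordered_zero := by
    convert hA.fromRows_fromCols_isTotallyUnimodular.submatrix
      (Sum.elim id fun _ => Sum.inr 1) id using 1
    ext (i | i) (j | j) <;> rfl
  bordered_one := by
    convert hA.fromRows_fromCols_isTotallyUnimodular.submatrix
      (Sum.elim id fun _ => Sum.inr 2) id using 1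
    ext (i | i) (j | j) <;> rfl

end IsSummand

end AppendedRows

end ThreeSum

theorem stmt13_general {R : Type*} [CommRing R] {a b c d : Type*}
    (A : Matrix a c R) (B : Matrix b d R) (e : a → R) (f : d → R) (g : b → R) (h : c → R)
    (h₁ : (fromBlocks A (of fun i (_ : Fin 2) => e i) (replicateRow Unit h)
      (of fun _ k => (k.val : R))).IsTotallyUnimodular)
    (h₂ : (fromBlocks (of fun (_ : Unit) (k : Fin 2) => (k.val : R)) (replicateRow Unit f)
      (of fun i _ => g i) B).IsTotallyUnimodular) :
    (fromRows (fromBlocks A (vecMulVec e f) (vecMulVec g h) B)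
      (fromCols (of ![0, h, h]) (of ![f, 0, f]))).IsTotallyUnimodular := by
  have hA : ThreeSum.IsSummand A e h := by
    constructor
    · convert h₁.submatrix id (Sum.map id fun _ : Unit => 0) using 1
      ext (i | i) (j | j) <;> simp [ThreeSum.bordered]
    · convert h₁.submatrix id (Sum.map id fun _ : Unit => 1) using 1
      ext (i | i) (j | j) <;> simp [ThreeSum.bordered]
  have hB : ThreeSum.IsSummand B g f := by
    constructor
    · convert h₂.submatrix Sum.swap (Sum.elim Sum.inr fun _ : Unit => Sum.inl 0) using 1
      ext (i | i) (j | j) <;> simp [ThreeSum.bordered]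
    · convert h₂.submatrix Sum.swap (Sum.elim Sum.inr fun _ : Unit => Sum.inl 1) using 1
      ext (i | i) (j | j) <;> simp [ThreeSum.bordered]
  convert (hA.fromRows.threeSum_isTotallyUnimodular hB).submatrix
    (Sum.elim (Sum.map Sum.inl id) (Sum.inl ∘ Sum.inr)) id using 1
  ext ((i | i) | i) (j | j)
  case inr.inr => fin_cases i <;> simp [ThreeSum.threeSum, vecMulVec_apply]
  all_goals rfl

/-- If `T = ((A, efᵀ), (ghᵀ, B))` is a 3-sum of the TU matrices
`((A, e, e), (hᵀ, 0, 1))` and `((0, 1, fᵀ), (g, g, B))`, then the matrix obtained from `T`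
by appending the three rows `(0, fᵀ)`, `(hᵀ, 0)` and `(hᵀ, fᵀ)` is totally unimodular. -/
theorem stmt13 (kA nA kB nB : ℕ)
    (A : Matrix (Fin kA) (Fin nA) ℤ) (B : Matrix (Fin kB) (Fin nB) ℤ)
    (e : Fin kA → ℤ) (f : Fin nB → ℤ) (g : Fin kB → ℤ) (h : Fin nA → ℤ)
    (h₁ : (Matrix.of fun (i : Fin kA ⊕ Unit) (j : Fin nA ⊕ Fin 2) =>
      match i, j with
      | Sum.inl i, Sum.inl j => A i j
      | Sum.inl i, Sum.inr _ => e i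
      | Sum.inr _, Sum.inl j => h j
      | Sum.inr _, Sum.inr c => (c.val : ℤ)).IsTotallyUnimodular)
    (h₂ : (Matrix.of fun (i : Unit ⊕ Fin kB) (j : Fin 2 ⊕ Fin nB) =>
      match i, j with
      | Sum.inl _, Sum.inl c => (c.val : ℤ)
      | Sum.inl _, Sum.inr j => f j
      | Sum.inr i, Sum.inl _ => g i
      | Sum.inr i, Sum.inr j => B i j).IsTotallyUnimodular) :
    (Matrix.fromRows
      (Matrix.fromBlocks A (Matrix.of fun i j => e i * f j)
        (Matrix.of fun i j => g i * h j) B)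
      (Matrix.of fun (i : Fin 3) (j : Fin nA ⊕ Fin nB) =>
        match j with
        | Sum.inl j => if i = 0 then 0 else h j
        | Sum.inr j => if i = 1 then 0 else f j)).IsTotallyUnimodular := by
  convert stmt13_general A B e f g h ?_ ?_ using 1
  · ext ((i | i) | i) (j | j)
    case inr.inl | inr.inr => fin_cases i <;> rfl
    all_goals rfl
  · convert h₁ using 1
    ext (i | i) (j | j) <;> rfl
  · convert h₂ using 1
    ext (i | i) (j | j) <;> rfl
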